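/- Let L ≥ 1 and let f_{i,j} : ℝ → ℂ (for 0 ≤ i, j ≤ L−1) be continuous 1-periodic functions, each with an absolutely convergent Fourier series. Define μ_0, …, μ_{L²−1} : ℝ → ℂ by μ_{i+jL} = f_{i,j} for 0 ≤ i, j ≤ L−1. Then ∫_{[0,1]^{2L²}} ∏_{i=0}^{L−1} ∏_{j=0}^{L−1} f_{i,j}(x^a_{i,j} − x^a_{i,(j+1) mod L} − x^b_{i,j} + x^b_{(i+1) mod L,j}) dx^a dx^b = ∫_{[0,1]^{L²}} ∏_{k=0}^{L²−1} μ_k(x_{(k+1) mod L²} − x_k) dx_0⋯dx_{L²−1}. -/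

import Mathlib

open MeasureTheory

/-- The `ℓ`-th Fourier coefficient of a 1-periodic function `f : ℝ → ℂ`,
`f̂(ℓ) = ∫₀¹ f(x) e^{−2πiℓx} dx`. -/
noncomputable def fourierCoeffR (f : ℝ → ℂ) (ℓ : ℤ) : ℂ :=
  ∫ x in (0:ℝ)..1, f x * Complex.exp (-(2 * Real.pi * Complex.I * ℓ * x))

/-- A finite product of absolutely convergent series is the absolutely convergent sum, over all
choices of indices, of the products of the chosen terms. -/
theorem summable_norm_prod_and_prod_tsum {ι : Type*} {N : ℕ} (F : Fin N → ι → ℂ)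
    (hF : ∀ k, Summable fun l => ‖F k l‖) :
    (Summable fun n : Fin N → ι => ‖∏ k, F k (n k)‖) ∧
      ∏ k, ∑' l, F k l = ∑' n : Fin N → ι, ∏ k, F k (n k) := by
  induction N with
  | zero => exact ⟨(hasSum_fintype _).summable, by simp⟩
  | succ N ih =>
    obtain ⟨hsum, htsum⟩ := ih (fun k => F k.succ) fun k => hF k.succ
    have hcons : ∀ p : ι × (Fin N → ι),
        ∏ k, F k (Fin.consEquiv (fun _ => ι) p k) = F 0 p.1 * ∏ k, F (Fin.succ k) (p.2 k) :=
      fun p => by simp [Fin.prod_univ_succ, Fin.consEquiv]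
    constructor
    · rw [← (Fin.consEquiv fun _ => ι).summable_iff]
      refine (Summable.mul_norm (hF 0) hsum).congr fun p => ?_
      rw [Function.comp_apply, hcons]
    · rw [Fin.prod_univ_succ, htsum, tsum_mul_tsum_of_summable_norm (hF 0) hsum,
        ← (Fin.consEquiv fun _ => ι).tsum_eq]
      exact tsum_congr fun p => (hcons p).symm

theorem norm_exp_two_pi_I_mul_int_mul (l : ℤ) (x : ℝ) :
    ‖Complex.exp (2 * Real.pi * Complex.I * l * x)‖ = 1 := by
  have h : (2 * Real.pi * Complex.I * l * x : ℂ) = ((2 * Real.pi * l * x : ℝ) : ℂ) * Complex.I := by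
    push_cast
    ring
  rw [h, Complex.norm_exp_ofReal_mul_I]

/-- The integral of a product of absolutely convergent trigonometric series composed with
continuous phases, expanded into integrals of exponentials. -/
theorem integral_prod_trigonometric_series {X : Type*} [TopologicalSpace X] [MeasurableSpace X]
    [OpensMeasurableSpace X] (μ : Measure X) [IsFiniteMeasure μ] {N : ℕ}
    (g : Fin N → ℝ → ℂ) (c : Fin N → ℤ → ℂ) (hc : ∀ k, Summable fun l => ‖c k l‖)
    (hg : ∀ k x, g k x = ∑' l : ℤ, c k l * Complex.exp (2 * Real.pi * Complex.I * l * x))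
    (φ : Fin N → X → ℝ) (hφ : ∀ k, Continuous (φ k)) :
    ∫ x, ∏ k, g k (φ k x) ∂μ = ∑' n : Fin N → ℤ, (∏ k, c k (n k)) *
      ∫ x, Complex.exp (∑ k, 2 * Real.pi * Complex.I * n k * φ k x) ∂μ := by
  set F : (Fin N → ℤ) → X → ℂ := fun n x =>
    (∏ k, c k (n k)) * Complex.exp (∑ k, 2 * Real.pi * Complex.I * n k * φ k x)
  have hF : ∀ n x,
      F n x = ∏ k, c k (n k) * Complex.exp (2 * Real.pi * Complex.I * n k * φ k x) :=
    fun n x => by rw [Finset.prod_mul_distrib, ← Complex.exp_sum]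
  have hnorm : ∀ n x, ‖F n x‖ = ‖∏ k, c k (n k)‖ := fun n x => by
    simp [hF, norm_prod, norm_exp_two_pi_I_mul_int_mul]
  have hcont : ∀ n, Continuous (F n) := fun n => by
    simp only [F]
    fun_prop
  have hint : ∀ n, Integrable (F n) μ := fun n =>
    .of_bound (hcont n).measurable.aestronglyMeasurable _ (.of_forall fun x => (hnorm n x).le)
  have hexpand : ∀ x, ∏ k, g k (φ k x) = ∑' n, F n x := fun x => by
    simp only [hg, hF]
    refine (summable_norm_prod_and_prod_tsum
      (fun k l => c k l * Complex.exp (2 * Real.pi * Complex.I * l * φ k x)) fun k => ?_).2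
    simpa [norm_exp_two_pi_I_mul_int_mul] using hc k
  simp only [hexpand]
  rw [← integral_tsum_of_summable_integral_norm hint]
  · simp only [F, integral_const_mul]
  · simp only [hnorm, integral_const]
    exact (summable_norm_prod_and_prod_tsum c hc).1.mul_left _

theorem setIntegral_Icc_exp_two_pi_I_mul_int_mul (m : ℤ) :
    ∫ x in Set.Icc (0 : ℝ) 1, Complex.exp (2 * Real.pi * Complex.I * m * x) =
      if m = 0 then 1 else 0 := by
  rw [integral_Icc_eq_integral_Ioc, ← intervalIntegral.integral_of_le zero_le_one]
  split_ifs with hm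
  · simp [hm]
  · rw [integral_exp_mul_complex (by simp [hm, Real.pi_ne_zero])]
    have h : Complex.exp (2 * Real.pi * Complex.I * m) = 1 := by
      rw [mul_comm]
      exact Complex.exp_int_mul_two_pi_mul_I m
    simp [h]

theorem setIntegral_Icc_pi_prod {V E : Type*} [Fintype V] [Preorder E] [MeasureSpace E]
    [SigmaFinite (volume : Measure E)] (a b : V → E) (f : V → E → ℂ) :
    ∫ x in Set.Icc a b, ∏ v, f v (x v) = ∏ v, ∫ y in Set.Icc (a v) (b v), f v y := by
  rw [← Set.pi_univ_Icc, volume_pi, Measure.restrict_pi_pi, integral_fintype_prod_eq_prod]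

/-- A function on `Fin N` invariant under the cyclic shift is constant. -/
theorem Fin.apply_eq_apply_zero_of_forall_add_one {α : Type*} {N : ℕ} [NeZero N] {g : Fin N → α}
    (h : ∀ k, g (k + 1) = g k) (k : Fin N) : g k = g 0 := by
  have hcast : ∀ t : ℕ, g (Fin.ofNat N t) = g 0 := fun t => by
    induction t with
    | zero => rfl
    | succ t ih =>
      rw [← ih, ← h (Fin.ofNat N t)]
      congr 1
      ext
      simp [Fin.val_add]
  simpa using hcast k

theorem setIntegral_exp_cyclic (N : ℕ) [NeZero N] (n : Fin N → ℤ) :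
    ∫ x in Set.Icc (0 : Fin N → ℝ) 1,
      Complex.exp (∑ k, 2 * Real.pi * Complex.I * n k * ((x (k + 1) - x k : ℝ) : ℂ)) =
      if ∀ k l, n k = n l then 1 else 0 := by
  have hphase : ∀ x : Fin N → ℝ,
      Complex.exp (∑ k, 2 * Real.pi * Complex.I * n k * ((x (k + 1) - x k : ℝ) : ℂ)) =
        ∏ k, Complex.exp (2 * Real.pi * Complex.I * ((n (k - 1) - n k : ℤ) : ℂ) * x k) := fun x => by
    rw [← Complex.exp_sum]
    congr 1
    have hshift : ∑ k, 2 * Real.pi * Complex.I * n k * x (k + 1) =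
        ∑ k, 2 * Real.pi * Complex.I * n (k - 1) * x k := by
      rw [← Equiv.sum_comp (Equiv.addRight (1 : Fin N))
        fun k => 2 * Real.pi * Complex.I * n (k - 1) * x k]
      simp
    push_cast
    simp only [mul_sub, sub_mul, Finset.sum_sub_distrib, hshift]
  simp only [hphase]
  rw [setIntegral_Icc_pi_prod 0 1
    fun k (y : ℝ) => Complex.exp (2 * Real.pi * Complex.I * ((n (k - 1) - n k : ℤ) : ℂ) * y)]
  simp only [Pi.zero_apply, Pi.one_apply, setIntegral_Icc_exp_two_pi_I_mul_int_mul,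
    Finset.prod_ite_zero, Finset.prod_const_one]
  refine if_congr ⟨fun h => ?_, fun h k _ => by simp [h (k - 1) k]⟩ rfl rfl
  have hconst := Fin.apply_eq_apply_zero_of_forall_add_one (g := n) fun k => by
    have := h (k + 1) (Finset.mem_univ _)
    rw [add_sub_cancel_right] at this
    omega
  exact fun k l => by rw [hconst k, hconst l]

theorem setIntegral_exp_plaquette (L : ℕ) [NeZero L] (n : Fin L → Fin L → ℤ) :
    ∫ x in Set.Icc (0 : (Fin L → Fin L → ℝ) × (Fin L → Fin L → ℝ)) 1,
      Complex.exp (∑ i, ∑ j, 2 * Real.pi * Complex.I * n i j *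
        ((x.1 i j - x.1 i (j + 1) - x.2 i j + x.2 (i + 1) j : ℝ) : ℂ)) =
      if ∀ i j i' j', n i j = n i' j' then 1 else 0 := by
  have hphase : ∀ x : (Fin L → Fin L → ℝ) × (Fin L → Fin L → ℝ),
      Complex.exp (∑ i, ∑ j, 2 * Real.pi * Complex.I * n i j *
        ((x.1 i j - x.1 i (j + 1) - x.2 i j + x.2 (i + 1) j : ℝ) : ℂ)) =
      (∏ i, ∏ j, Complex.exp (2 * Real.pi * Complex.I * ((n i j - n i (j - 1) : ℤ) : ℂ) *
          x.1 i j)) *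
        ∏ i, ∏ j, Complex.exp (2 * Real.pi * Complex.I * ((n (i - 1) j - n i j : ℤ) : ℂ) *
          x.2 i j) := fun x => by
    simp only [← Complex.exp_sum, ← Complex.exp_add]
    congr 1
    have hshift_snd : ∀ i, ∑ j, 2 * Real.pi * Complex.I * n i j * x.1 i (j + 1) =
        ∑ j, 2 * Real.pi * Complex.I * n i (j - 1) * x.1 i j := fun i => by
      rw [← Equiv.sum_comp (Equiv.addRight (1 : Fin L))
        fun j => 2 * Real.pi * Complex.I * n i (j - 1) * x.1 i j]
      simp
    have hshift_fst : ∑ i, ∑ j, 2 * Real.pi * Complex.I * n i j * x.2 (i + 1) j =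
        ∑ i, ∑ j, 2 * Real.pi * Complex.I * n (i - 1) j * x.2 i j := by
      rw [← Equiv.sum_comp (Equiv.addRight (1 : Fin L))
        fun i => ∑ j, 2 * Real.pi * Complex.I * n (i - 1) j * x.2 i j]
      simp
    push_cast
    simp only [mul_sub, mul_add, sub_mul, Finset.sum_sub_distrib, Finset.sum_add_distrib,
      hshift_snd, hshift_fst]
    ring
  have hfactor : ∀ m : Fin L → Fin L → ℤ, ∫ x in Set.Icc (0 : Fin L → Fin L → ℝ) 1,
      ∏ i, ∏ j, Complex.exp (2 * Real.pi * Complex.I * m i j * x i j) =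
        if ∀ i j, m i j = 0 then 1 else 0 := fun m => by
    rw [setIntegral_Icc_pi_prod 0 1
      fun i (y : Fin L → ℝ) => ∏ j, Complex.exp (2 * Real.pi * Complex.I * m i j * y j)]
    have hrow : ∀ i, ∫ y in Set.Icc (0 : Fin L → ℝ) 1,
        ∏ j, Complex.exp (2 * Real.pi * Complex.I * m i j * y j) =
          if ∀ j, m i j = 0 then 1 else 0 := fun i => by
      rw [setIntegral_Icc_pi_prod 0 1
        fun j (y : ℝ) => Complex.exp (2 * Real.pi * Complex.I * m i j * y)]
      simp [setIntegral_Icc_exp_two_pi_I_mul_int_mul, Finset.prod_ite_zero]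
    simp [hrow, Finset.prod_ite_zero]
  simp only [hphase]
  rw [show Set.Icc (0 : (Fin L → Fin L → ℝ) × (Fin L → Fin L → ℝ)) 1 =
    Set.Icc 0 1 ×ˢ Set.Icc 0 1 from (Set.Icc_prod_Icc _ _ _ _).symm, Measure.volume_eq_prod,
    setIntegral_prod_mul
      (fun y : Fin L → Fin L → ℝ => ∏ i, ∏ j, Complex.exp (2 * Real.pi * Complex.I *
        ((n i j - n i (j - 1) : ℤ) : ℂ) * y i j))
      (fun y : Fin L → Fin L → ℝ => ∏ i, ∏ j, Complex.exp (2 * Real.pi * Complex.I *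
        ((n (i - 1) j - n i j : ℤ) : ℂ) * y i j)),
    hfactor fun i j => n i j - n i (j - 1), hfactor fun i j => n (i - 1) j - n i j,
    ite_zero_mul_ite_zero, mul_one]
  refine if_congr ⟨fun ⟨hsnd, hfst⟩ => ?_, fun h => ⟨fun i j => by simp [h i j i (j - 1)],
    fun i j => by simp [h (i - 1) j i j]⟩⟩ rfl rfl
  have hconst_snd : ∀ i j, n i j = n i 0 := fun i =>
    Fin.apply_eq_apply_zero_of_forall_add_one fun j => by
      have := hsnd i (j + 1)
      rw [add_sub_cancel_right] at this
      omega
  have hconst_fst : ∀ i, n i 0 = n 0 0 :=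
    Fin.apply_eq_apply_zero_of_forall_add_one (g := fun i => n i 0) fun i => by
      have := hfst (i + 1) 0
      rw [add_sub_cancel_right] at this
      omega
  exact fun i j i' j' => by rw [hconst_snd i j, hconst_snd i' j', hconst_fst i, hconst_fst i']

theorem stmt10 (L : ℕ) [NeZero L] (f : Fin L → Fin L → ℝ → ℂ)
    (hcont : ∀ i j, Continuous (f i j))
    (hper : ∀ i j (x : ℝ), f i j (x + 1) = f i j x)
    (habs : ∀ i j, Summable fun ℓ : ℤ => ‖fourierCoeffR (f i j) ℓ‖)
    (hrep : ∀ i j (x : ℝ),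
      f i j x = ∑' ℓ : ℤ, fourierCoeffR (f i j) ℓ *
        Complex.exp (2 * Real.pi * Complex.I * ℓ * x))
    (mu : Fin (L ^ 2) → ℝ → ℂ)
    (hmu : ∀ i j : Fin L,
      mu ⟨i.val + j.val * L, by
        have hi := i.isLt
        have h2 : (j.val + 1) * L ≤ L * L := Nat.mul_le_mul_right L j.isLt
        rw [add_mul, one_mul] at h2
        have h3 : L ^ 2 = L * L := sq L
        omega⟩ = f i j) :
    (∫ x in Set.Icc (0 : (Fin L → Fin L → ℝ) × (Fin L → Fin L → ℝ)) 1,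
      ∏ i, ∏ j, f i j (x.1 i j - x.1 i (j + 1) - x.2 i j + x.2 (i + 1) j)) =
      ∫ x in Set.Icc (0 : Fin (L ^ 2) → ℝ) 1, ∏ k, mu k (x (k + 1) - x k) := by
  let e : Fin L × Fin L ≃ Fin (L ^ 2) :=
    (Equiv.prodComm _ _).trans (finProdFinEquiv.trans (finCongr (sq L).symm))
  have he : ∀ i j, mu (e (i, j)) = f i j := fun i j => by
    rw [← hmu i j]
    congr 1
    ext
    simp [e, mul_comm]
  have hmu_symm : ∀ k, mu k = f (e.symm k).1 (e.symm k).2 := fun k => by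
    rw [← he, Prod.mk.eta, e.apply_symm_apply]
  have hsum : ∀ k, Summable fun l => ‖fourierCoeffR (mu k) l‖ := fun k => by
    rw [hmu_symm]
    exact habs _ _
  have hseries : ∀ k x, mu k x = ∑' l : ℤ, fourierCoeffR (mu k) l *
      Complex.exp (2 * Real.pi * Complex.I * l * x) := fun k => by
    rw [hmu_symm]
    exact hrep _ _
  have hprod : ∀ x : (Fin L → Fin L → ℝ) × (Fin L → Fin L → ℝ),
      ∏ i, ∏ j, f i j (x.1 i j - x.1 i (j + 1) - x.2 i j + x.2 (i + 1) j) =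
        ∏ k, mu k ((fun (p : Fin L × Fin L) (x : (Fin L → Fin L → ℝ) × (Fin L → Fin L → ℝ)) =>
          x.1 p.1 p.2 - x.1 p.1 (p.2 + 1) - x.2 p.1 p.2 + x.2 (p.1 + 1) p.2) (e.symm k) x) :=
    fun x => by
      rw [← e.prod_comp, Fintype.prod_prod_type]
      simp only [he, e.symm_apply_apply]
  have : IsFiniteMeasure (volume.restrict
      (Set.Icc (0 : (Fin L → Fin L → ℝ) × (Fin L → Fin L → ℝ)) 1)) :=
    ⟨by
      rw [Measure.restrict_apply_univ, Measure.volume_eq_prod, Prod.zero_eq_mk, Prod.one_eq_mk,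
        ← Set.Icc_prod_Icc, Measure.prod_prod]
      exact ENNReal.mul_lt_top isCompact_Icc.measure_lt_top isCompact_Icc.measure_lt_top⟩
  have : IsFiniteMeasure (volume.restrict (Set.Icc (0 : Fin (L ^ 2) → ℝ) 1)) :=
    ⟨by simpa using isCompact_Icc.measure_lt_top⟩
  simp only [hprod]
  rw [integral_prod_trigonometric_series _ mu _ hsum hseries _ fun k => by fun_prop,
    integral_prod_trigonometric_series _ mu _ hsum hseries
      (fun k (x : Fin (L ^ 2) → ℝ) => x (k + 1) - x k)
      fun k => by fun_prop]
  refine tsum_congr fun n => ?_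
  congr 1
  rw [setIntegral_exp_cyclic]
  have hplaquette := setIntegral_exp_plaquette L fun i j => n (e (i, j))
  simp only [← e.sum_comp, Fintype.sum_prod_type, e.symm_apply_apply]
  rw [hplaquette]
  refine if_congr ⟨fun h k l => ?_, fun h i j i' j' => h _ _⟩ rfl rfl
  simpa using h (e.symm k).1 (e.symm k).2 (e.symm l).1 (e.symm l).2
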